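/- arXiv:1807.03536 — 2 statements merged into one kernel-verified Lean document; each statement's English description precedes it below -/
import Mathlib

section
/- Let Φ̊ be a root system in V and (Λ_α)_{α ∈ Φ̊ ∪ {0}} an extension datum of type (Φ̊, Y). Then for all α, β ∈ Φ̊ one has Λ_{s_β(α)} = Λ_α (hence Λ_{w(α)} = Λ_α for every w in the Weyl group W(Φ̊) generated by the reflections s_γ, γ ∈ Φ̊), and Λ_{−α} = Λ_α = −Λ_α. -/
/-!
If `0 ∈ Λ γ`, condition (1) for `γ` with `z = 0` reads `Λ α ⊆ Λ (s_γ α)`, and equality holds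
because `s_γ` is an involution. This covers every non-divisible `γ`. A divisible root `β` defines
the same reflection as `β / 2`, which is non-divisible: otherwise `β / 4` would be a root with
`(β / 4, β∨) = 1 / 2`. Finally `s_α α = -α`, and for `y ∈ Λ α` condition (1) gives
`-y = y - 2 y ∈ Λ (-α) = Λ α`.
-/

open scoped RealInnerProductSpace Pointwise

noncomputable section

namespace BdS

variable {V Y : Type*} [NormedAddCommGroup V] [InnerProductSpace ℝ V]
variable [AddCommGroup Y] [Module ℝ Y]

/-- `pairing β α = (β, α∨) = 2(β,α)/(α,α)`. -/
def pairing (β α : V) : ℝ := 2 * ⟪β, α⟫ / ⟪α, α⟫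

/-- `reflRoot α v = s_α(v) = v − (v, α∨)α`. -/
def reflRoot (α v : V) : V := v - pairing v α • α

/-- A (finite) root system in `V`. -/
def IsRootSystem (Φ : Set V) : Prop :=
  Φ.Finite ∧ (0 : V) ∉ Φ ∧ Submodule.span ℝ Φ = ⊤ ∧
    (∀ α ∈ Φ, ∀ β ∈ Φ, reflRoot α β ∈ Φ) ∧
    ∀ α ∈ Φ, ∀ β ∈ Φ, ∃ m : ℤ, pairing β α = (m : ℝ)

def IsReduced (Φ : Set V) : Prop :=
  ∀ α ∈ Φ, ∀ c : ℝ, c • α ∈ Φ → c • α = α ∨ c • α = -α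

def IsIrreducible (Φ : Set V) : Prop :=
  ∀ Φ₁ Φ₂ : Set V, Φ = Φ₁ ∪ Φ₂ → (∀ x ∈ Φ₁, ∀ y ∈ Φ₂, ⟪x, y⟫ = 0) →
    Φ₁ = ∅ ∨ Φ₂ = ∅

/-- divisible roots -/
def divSet (Φ : Set V) : Set V := {α ∈ Φ | (2:ℝ)⁻¹ • α ∈ Φ}
/-- non-divisible roots -/
def ndSet (Φ : Set V) : Set V := Φ \ divSet Φ
/-- short roots: non-divisible roots of non-maximal squared length -/
def shortSet (Φ : Set V) : Set V := {α ∈ ndSet Φ | ∃ β ∈ ndSet Φ, ⟪α, α⟫ < ⟪β, β⟫}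
/-- long roots -/
def longSet (Φ : Set V) : Set V := ndSet Φ \ shortSet Φ

/-- An extension datum of type `(Φ, Y)`. -/
def IsExtensionDatum (Φ : Set V) (Λ : V → Set Y) : Prop :=
  (∀ α ∈ Φ, ∀ β ∈ Φ, ∀ z ∈ Λ α, ∀ y ∈ Λ β, y - pairing β α • z ∈ Λ (reflRoot α β)) ∧
  (0 : Y) ∈ Λ 0 ∧
  (∀ α ∈ ndSet Φ, (0 : Y) ∈ Λ α) ∧
  (∀ α ∈ divSet Φ, (Λ α).Nonempty) ∧
  Submodule.span ℝ (⋃ α ∈ insert (0 : V) Φ, Λ α) = ⊤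

/-- subroot system of a finite root system -/
def IsSubRS (Φ Δ : Set V) : Prop :=
  Δ.Nonempty ∧ Δ ⊆ Φ ∧ ∀ α ∈ Δ, ∀ β ∈ Δ, reflRoot α β ∈ Δ

def IsClosedSubRS (Φ Δ : Set V) : Prop :=
  IsSubRS Φ Δ ∧ ∀ α ∈ Δ, ∀ β ∈ Δ, α + β ∈ Φ → α + β ∈ Δ

def IsMaxClosedSubRS (Φ Δ : Set V) : Prop :=
  IsClosedSubRS Φ Δ ∧ Δ ≠ Φ ∧
    ∀ Δ' : Set V, IsClosedSubRS Φ Δ' → Δ' ≠ Φ → Δ ⊆ Δ' → Δ' = Δ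

/-- semi-closed subroot system, relative to given short/long/divisible parts -/
def IsSemiClosedSubRS (Φ Φs Φl Φd Δ : Set V) : Prop :=
  IsSubRS Φ Δ ∧ ¬ (∀ α ∈ Δ, ∀ β ∈ Δ, α + β ∈ Φ → α + β ∈ Δ) ∧
    ∀ α ∈ Δ, ∀ β ∈ Δ, α + β ∈ Φ → α + β ∉ Δ →
      (α ∈ Φs ∧ β ∈ Φs ∧ α + β ∈ Φl ∪ Φd) ∨ (α ∈ Φl ∧ β ∈ Φl ∧ α + β ∈ Φd)

def IsMaxSemiClosedSubRS (Φ Φs Φl Φd Δ : Set V) : Prop :=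
  IsSemiClosedSubRS Φ Φs Φl Φd Δ ∧
    ∀ Δ' : Set V, IsClosedSubRS Φ Δ' → Δ' ≠ Φ → ¬ Δ ⊂ Δ'

/-- the set of real roots attached to an extension datum -/
def PhiRe (Φ : Set V) (Λ : V → Set Y) : Set (V × Y) := {x | x.1 ∈ Φ ∧ x.2 ∈ Λ x.1}

/-- affine reflection `s_{α ⊕ y}(β ⊕ z) = s_α(β) ⊕ (z − (β,α∨)y)` -/
def reflAff (a x : V × Y) : V × Y := (reflRoot a.1 x.1, x.2 - pairing x.1 a.1 • a.2)

/-- subroot system of a set of real roots `R` -/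
def IsSubSys (R Ψ : Set (V × Y)) : Prop :=
  Ψ.Nonempty ∧ Ψ ⊆ R ∧ Ψ ≠ R ∧ ∀ a ∈ Ψ, ∀ x ∈ Ψ, reflAff a x ∈ Ψ

def IsClosedSubSys (R Ψ : Set (V × Y)) : Prop :=
  IsSubSys R Ψ ∧ ∀ x ∈ Ψ, ∀ y ∈ Ψ, x + y ∈ R → x + y ∈ Ψ

def IsMaxClosedSubSys (R Ψ : Set (V × Y)) : Prop :=
  IsClosedSubSys R Ψ ∧ ∀ Ψ' : Set (V × Y), IsClosedSubSys R Ψ' → Ψ ⊆ Ψ' → Ψ' = Ψ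

/-- gradient of a subroot system -/
def Gr (Ψ : Set (V × Y)) : Set V := {α | ∃ y : Y, (α, y) ∈ Ψ}

def Zset (Ψ : Set (V × Y)) (α : V) : Set Y := {y | (α, y) ∈ Ψ}

abbrev E (n : ℕ) := EuclideanSpace ℝ (Fin n)

def eps {n : ℕ} (i : Fin n) : E n := EuclideanSpace.single i 1

def shortBC (n : ℕ) : Set (E n) := {v | ∃ i : Fin n, v = eps i ∨ v = -eps i}

def longBC (n : ℕ) : Set (E n) :=
  {v | ∃ i j : Fin n, i ≠ j ∧ ∃ c d : ℝ, (c = 1 ∨ c = -1) ∧ (d = 1 ∨ d = -1) ∧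
    v = c • eps i + d • eps j}

def divBC (n : ℕ) : Set (E n) :=
  {v | ∃ i : Fin n, v = (2:ℝ) • eps i ∨ v = -((2:ℝ) • eps i)}

def BCn (n : ℕ) : Set (E n) := shortBC n ∪ longBC n ∪ divBC n
def Bn (n : ℕ) : Set (E n) := shortBC n ∪ longBC n
def Cn (n : ℕ) : Set (E n) := longBC n ∪ divBC n

/-- A set of vectors stable under the reflections in its elements. -/
def IsReflectionClosed (Φ : Set V) : Prop := ∀ α ∈ Φ, ∀ β ∈ Φ, reflRoot α β ∈ Φ

/-- A set of vectors satisfying the integrality condition on root systems. -/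
def IsCrystallographic (Φ : Set V) : Prop := ∀ α ∈ Φ, ∀ β ∈ Φ, ∃ m : ℤ, pairing β α = m

/-- Condition (1) on extension data. When `Φ` is closed under reflections, it says that `PhiRe Φ Λ`
is closed under the affine reflections `reflAff` in its elements. -/
def IsReflectionCompatible (Φ : Set V) (Λ : V → Set Y) : Prop :=
  ∀ α ∈ Φ, ∀ β ∈ Φ, ∀ z ∈ Λ α, ∀ y ∈ Λ β, y - pairing β α • z ∈ Λ (reflRoot α β)

theorem pairing_self {α : V} (hα : α ≠ 0) : pairing α α = 2 :=
  mul_div_cancel_right₀ 2 (inner_self_ne_zero.mpr hα)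

theorem pairing_smul_left (c : ℝ) (α β : V) : pairing (c • α) β = c * pairing α β := by
  rw [pairing, pairing, real_inner_smul_left]
  ring

theorem reflRoot_eq_reflection (α v : V) : reflRoot α v = (ℝ ∙ α)ᗮ.reflection v := by
  rw [Submodule.reflection_orthogonal_apply, Submodule.reflection_singleton_apply, neg_sub,
    reflRoot, pairing, real_inner_self_eq_norm_sq, real_inner_comm, mul_div_assoc, mul_smul,
    ofNat_smul_eq_nsmul, RCLike.ofReal_real_eq_id, id_eq]

theorem reflRoot_reflRoot (α v : V) : reflRoot α (reflRoot α v) = v := by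
  simp only [reflRoot_eq_reflection, Submodule.reflection_reflection]

theorem reflRoot_smul {c : ℝ} (hc : c ≠ 0) (α : V) : reflRoot (c • α) = reflRoot α := by
  ext v
  simp only [reflRoot_eq_reflection, Submodule.span_singleton_smul_eq hc.isUnit]

theorem reflRoot_self (α : V) : reflRoot α α = -α := by
  rw [reflRoot_eq_reflection, Submodule.reflection_orthogonalComplement_singleton_eq_neg]

variable {Φ : Set V} {Λ : V → Set Y}

theorem IsCrystallographic.half_mem_ndSet (hΦ : IsCrystallographic Φ) (h0 : 0 ∉ Φ) {β : V}
    (hβ : β ∈ divSet Φ) : (2 : ℝ)⁻¹ • β ∈ ndSet Φ := by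
  refine ⟨hβ.2, fun half_mem_divSet => ?_⟩
  obtain ⟨m, hm⟩ := hΦ β hβ.1 _ half_mem_divSet.2
  have quarter_pairing : pairing ((2 : ℝ)⁻¹ • (2 : ℝ)⁻¹ • β) β = 1 / 2 := by
    rw [pairing_smul_left, pairing_smul_left, pairing_self (ne_of_mem_of_not_mem hβ.1 h0)]
    norm_num
  have two_mul_eq_one : (2 * m : ℝ) = 1 := by linarith
  norm_cast at two_mul_eq_one
  omega

theorem IsReflectionClosed.foldr_reflRoot_mem (hΦ : IsReflectionClosed Φ) {α : V} (hα : α ∈ Φ)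
    {l : List V} (hl : ∀ γ ∈ l, γ ∈ Φ) : l.foldr reflRoot α ∈ Φ :=
  List.foldrRecOn l reflRoot hα fun β hβ γ hγ => hΦ γ (hl γ hγ) β hβ

theorem IsReflectionClosed.apply_foldr_reflRoot {X : Type*} {f : V → X} (hΦ : IsReflectionClosed Φ)
    (hf : ∀ α ∈ Φ, ∀ β ∈ Φ, f (reflRoot β α) = f α) {α : V} (hα : α ∈ Φ) {l : List V}
    (hl : ∀ γ ∈ l, γ ∈ Φ) : f (l.foldr reflRoot α) = f α := by
  induction l with
  | nil => rfl
  | cons γ l ih =>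
    obtain ⟨hγ, hl⟩ := List.forall_mem_cons.mp hl
    exact (hf _ (hΦ.foldr_reflRoot_mem hα hl) γ hγ).trans (ih hl)

namespace IsReflectionCompatible

theorem subset_apply_reflRoot (hΛ : IsReflectionCompatible Φ Λ) {γ α : V} (hγ : γ ∈ Φ) (hα : α ∈ Φ)
    (zero_mem : 0 ∈ Λ γ) : Λ α ⊆ Λ (reflRoot γ α) := fun y hy => by
  simpa only [smul_zero, sub_zero] using hΛ γ hγ α hα 0 zero_mem y hy

theorem apply_reflRoot_of_zero_mem (hΛ : IsReflectionCompatible Φ Λ) (hΦ : IsReflectionClosed Φ)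
    {γ α : V} (hγ : γ ∈ Φ) (hα : α ∈ Φ) (zero_mem : 0 ∈ Λ γ) : Λ (reflRoot γ α) = Λ α := by
  refine Set.Subset.antisymm ?_ (hΛ.subset_apply_reflRoot hγ hα zero_mem)
  simpa only [reflRoot_reflRoot] using hΛ.subset_apply_reflRoot hγ (hΦ γ hγ α hα) zero_mem

theorem apply_reflRoot (hΛ : IsReflectionCompatible Φ Λ) (hΦ : IsReflectionClosed Φ)
    (hcrys : IsCrystallographic Φ) (h0 : 0 ∉ Φ) (zero_mem : ∀ γ ∈ ndSet Φ, 0 ∈ Λ γ) {α β : V}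
    (hα : α ∈ Φ) (hβ : β ∈ Φ) : Λ (reflRoot β α) = Λ α := by
  by_cases hdiv : β ∈ divSet Φ
  · have half_mem := hcrys.half_mem_ndSet h0 hdiv
    rw [← reflRoot_smul (inv_ne_zero two_ne_zero) β]
    exact hΛ.apply_reflRoot_of_zero_mem hΦ half_mem.1 hα (zero_mem _ half_mem)
  · exact hΛ.apply_reflRoot_of_zero_mem hΦ hβ hα (zero_mem β ⟨hβ, hdiv⟩)

theorem neg_mem_apply_neg (hΛ : IsReflectionCompatible Φ Λ) {α : V} (hα : α ∈ Φ) (hα0 : α ≠ 0)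
    {y : Y} (hy : y ∈ Λ α) : -y ∈ Λ (-α) := by
  have h := hΛ α hα α hα y hy y hy
  rwa [pairing_self hα0, reflRoot_self, two_smul, sub_add_cancel_left] at h

end IsReflectionCompatible

theorem statement1_general (h0 : 0 ∉ Φ) (hΦ : IsReflectionClosed Φ) (hcrys : IsCrystallographic Φ)
    (hΛ : IsReflectionCompatible Φ Λ) (zero_mem : ∀ γ ∈ ndSet Φ, 0 ∈ Λ γ) :
    (∀ α ∈ Φ, ∀ β ∈ Φ, Λ (reflRoot β α) = Λ α) ∧
    (∀ α ∈ Φ, ∀ l : List V, (∀ γ ∈ l, γ ∈ Φ) → Λ (l.foldr reflRoot α) = Λ α) ∧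
    (∀ α ∈ Φ, Λ (-α) = Λ α ∧ Λ α = -Λ α) := by
  have invariant : ∀ α ∈ Φ, ∀ β ∈ Φ, Λ (reflRoot β α) = Λ α :=
    fun α hα β hβ => hΛ.apply_reflRoot hΦ hcrys h0 zero_mem hα hβ
  refine ⟨invariant, fun α hα l hl => hΦ.apply_foldr_reflRoot invariant hα hl, fun α hα => ?_⟩
  have apply_neg : Λ (-α) = Λ α := by rw [← reflRoot_self, invariant α hα α hα]
  have subset_neg : Λ α ⊆ -Λ α := fun y hy =>
    apply_neg ▸ hΛ.neg_mem_apply_neg hα (ne_of_mem_of_not_mem hα h0) hy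
  exact ⟨apply_neg, subset_neg.antisymm (Set.neg_subset.mpr subset_neg)⟩

/-- Proposition 2.8: Weyl-group invariance and symmetry of an extension datum. -/
theorem statement1 {V Y : Type*} [NormedAddCommGroup V] [InnerProductSpace ℝ V]
    [AddCommGroup Y] [Module ℝ Y] [FiniteDimensional ℝ V] [FiniteDimensional ℝ Y]
    (Φ : Set V) (Λ : V → Set Y) (hΦ : IsRootSystem Φ) (hΛ : IsExtensionDatum Φ Λ) :
    (∀ α ∈ Φ, ∀ β ∈ Φ, Λ (reflRoot β α) = Λ α) ∧
    (∀ α ∈ Φ, ∀ l : List V, (∀ γ ∈ l, γ ∈ Φ) → Λ (l.foldr reflRoot α) = Λ α) ∧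
    (∀ α ∈ Φ, Λ (-α) = Λ α ∧ Λ α = -Λ α) :=
  statement1_general hΦ.2.1 hΦ.2.2.2.1 hΦ.2.2.2.2 hΛ.1 hΛ.2.2.1

end BdS
end
end

section
/- Let Φ̊ ⊂ ℝⁿ be the root system of type C_n with n ≥ 3 and let (Λ_α) be an extension datum of type (Φ̊, Y), with common values Λ_s on short roots and Λ_ℓ on long roots. Then Λ_s is an additive subgroup of Y, and Λ_ℓ + 2Λ_s ⊆ Λ_ℓ and Λ_s + Λ_ℓ ⊆ Λ_s; moreover Λ_ℓ + 2Λ_ℓ = Λ_ℓ. -/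
open scoped RealInnerProductSpace Pointwise

noncomputable section

namespace BdS

variable {V Y : Type*} [NormedAddCommGroup V] [InnerProductSpace ℝ V]
variable [AddCommGroup Y] [Module ℝ Y]

theorem IsReflectionCompatible.sub_smul_mem {Φ : Set V} {Λ : V → Set Y}
    (hΛ : IsReflectionCompatible Φ Λ) {α β : V} (hα : α ∈ Φ) (hβ : β ∈ Φ) {c : ℝ}
    (hc : pairing β α = c) {y z : Y} (hy : y ∈ Λ β) (hz : z ∈ Λ α) :
    y - c • z ∈ Λ (β - c • α) := by
  subst hc
  exact hΛ α hα β hβ z hz y hy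

theorem IsExtensionDatum.nonempty {Φ : Set V} {Λ : V → Set Y} (hΛ : IsExtensionDatum Φ Λ)
    {α : V} (hα : α ∈ Φ) : (Λ α).Nonempty := by
  obtain ⟨-, -, zero_mem, div_nonempty, -⟩ := hΛ
  by_cases hdiv : α ∈ divSet Φ
  · exact div_nonempty α hdiv
  · exact ⟨0, zero_mem α ⟨hα, hdiv⟩⟩

section Roots

variable {n : ℕ} {i j k : Fin n}

theorem eps_add_eps_mem_longBC (hij : i ≠ j) : eps i + eps j ∈ longBC n :=
  ⟨i, j, hij, 1, 1, .inl rfl, .inl rfl, by simp⟩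

theorem eps_sub_eps_mem_longBC (hij : i ≠ j) : eps i - eps j ∈ longBC n :=
  ⟨i, j, hij, 1, -1, .inl rfl, .inr rfl, by simp [sub_eq_add_neg]⟩

theorem longBC_nonempty (hn : 2 ≤ n) : (longBC n).Nonempty :=
  have := Fin.nontrivial_iff_two_le.mpr hn
  let ⟨_, _, hij⟩ := exists_pair_ne (Fin n)
  ⟨_, eps_add_eps_mem_longBC hij⟩

theorem two_smul_eps_mem_divBC (i : Fin n) : (2 : ℝ) • eps i ∈ divBC n :=
  ⟨i, .inl rfl⟩

theorem inner_eps_self (i : Fin n) : ⟪(eps i : E n), eps i⟫ = 1 := by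
  simp [eps]

theorem inner_eps_of_ne (hij : i ≠ j) : ⟪(eps i : E n), eps j⟫ = 0 := by
  simp [eps, EuclideanSpace.inner_single_left, hij]

theorem pairing_eps_sub_eps_eps_sub_eps (hij : i ≠ j) (hik : i ≠ k) (hjk : j ≠ k) :
    pairing (eps i - eps k : E n) (eps i - eps j) = 1 := by
  simp only [pairing, inner_sub_left, inner_sub_right, inner_eps_self, inner_eps_of_ne hij,
    inner_eps_of_ne hij.symm, inner_eps_of_ne hik.symm, inner_eps_of_ne hjk.symm]
  norm_num

theorem pairing_two_smul_eps_eps_sub_eps (hij : i ≠ j) :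
    pairing ((2 : ℝ) • eps i : E n) (eps i - eps j) = 2 := by
  simp only [pairing, inner_sub_left, inner_sub_right, real_inner_smul_left, inner_eps_self,
    inner_eps_of_ne hij, inner_eps_of_ne hij.symm]
  norm_num

theorem pairing_eps_add_eps_two_smul_eps (hij : i ≠ j) :
    pairing (eps i + eps j : E n) ((2 : ℝ) • eps j) = 1 := by
  simp only [pairing, inner_add_left, real_inner_smul_left, real_inner_smul_right, inner_eps_self,
    inner_eps_of_ne hij]
  norm_num

end Roots

namespace IsReflectionCompatible

variable {n : ℕ} {Λ : E n → Set Y} {Λs Λl : Set Y}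

theorem short_sub_short_mem (hΛ : IsReflectionCompatible (Cn n) Λ) (hn : 3 ≤ n)
    (hs : ∀ α ∈ longBC n, Λ α = Λs) {y z : Y} (hy : y ∈ Λs) (hz : z ∈ Λs) : y - z ∈ Λs := by
  obtain ⟨i, j, k, hij, hik, hjk⟩ : ∃ i j k : Fin n, i ≠ j ∧ i ≠ k ∧ j ≠ k :=
    Fintype.two_lt_card_iff.mp (by rwa [Fintype.card_fin])
  have hα := eps_sub_eps_mem_longBC hij
  have hβ := eps_sub_eps_mem_longBC hik
  have reflection : (eps i - eps k : E n) - (1 : ℝ) • (eps i - eps j) = eps j - eps k := by module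
  have mem := hΛ.sub_smul_mem (.inl hα) (.inl hβ) (pairing_eps_sub_eps_eps_sub_eps hij hik hjk)
    ((hs _ hβ).symm ▸ hy) ((hs _ hα).symm ▸ hz)
  rwa [reflection, hs _ (eps_sub_eps_mem_longBC hjk), one_smul] at mem

theorem long_sub_two_smul_short_mem (hΛ : IsReflectionCompatible (Cn n) Λ) (hn : 2 ≤ n)
    (hs : ∀ α ∈ longBC n, Λ α = Λs) (hl : ∀ α ∈ divBC n, Λ α = Λl)
    {y z : Y} (hy : y ∈ Λl) (hz : z ∈ Λs) : y - (2 : ℝ) • z ∈ Λl := by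
  have := Fin.nontrivial_iff_two_le.mpr hn
  obtain ⟨i, j, hij⟩ := exists_pair_ne (Fin n)
  have hα := eps_sub_eps_mem_longBC hij
  have hβ := two_smul_eps_mem_divBC i
  have reflection : (2 : ℝ) • (eps i : E n) - (2 : ℝ) • (eps i - eps j) = (2 : ℝ) • eps j := by
    module
  have mem := hΛ.sub_smul_mem (.inl hα) (.inr hβ) (pairing_two_smul_eps_eps_sub_eps hij)
    ((hl _ hβ).symm ▸ hy) ((hs _ hα).symm ▸ hz)
  rwa [reflection, hl _ (two_smul_eps_mem_divBC j)] at mem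

theorem short_sub_long_mem (hΛ : IsReflectionCompatible (Cn n) Λ) (hn : 2 ≤ n)
    (hs : ∀ α ∈ longBC n, Λ α = Λs) (hl : ∀ α ∈ divBC n, Λ α = Λl)
    {y z : Y} (hy : y ∈ Λs) (hz : z ∈ Λl) : y - z ∈ Λs := by
  have := Fin.nontrivial_iff_two_le.mpr hn
  obtain ⟨i, j, hij⟩ := exists_pair_ne (Fin n)
  have hα := two_smul_eps_mem_divBC j
  have hβ := eps_add_eps_mem_longBC hij
  have reflection : (eps i + eps j : E n) - (1 : ℝ) • (2 : ℝ) • eps j = eps i - eps j := by module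
  have mem := hΛ.sub_smul_mem (.inr hα) (.inl hβ) (pairing_eps_add_eps_two_smul_eps hij)
    ((hs _ hβ).symm ▸ hy) ((hl _ hα).symm ▸ hz)
  rwa [reflection, hs _ (eps_sub_eps_mem_longBC hij), one_smul] at mem

end IsReflectionCompatible

theorem statement2_general {n : ℕ} (hn : 3 ≤ n) (Λ : E n → Set Y) (Λs Λl : Set Y)
    (hΛ : IsReflectionCompatible (Cn n) Λ) (hne : Λs.Nonempty)
    (hs : ∀ α ∈ longBC n, Λ α = Λs) (hl : ∀ α ∈ divBC n, Λ α = Λl) :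
    (∃ G : AddSubgroup Y, Λs = (G : Set Y)) ∧
    (∀ a ∈ Λl, ∀ b ∈ Λs, a + b + b ∈ Λl) ∧
    (∀ a ∈ Λs, ∀ b ∈ Λl, a + b ∈ Λs) ∧
    {x : Y | ∃ a ∈ Λl, ∃ b ∈ Λl, x = a + b + b} = Λl := by
  have hn2 : 2 ≤ n := by omega
  obtain ⟨G, rfl⟩ : ∃ G : AddSubgroup Y, Λs = (G : Set Y) :=
    ⟨AddSubgroup.ofSub Λs hne fun y hy z hz => by
      simpa only [sub_eq_add_neg] using hΛ.short_sub_short_mem hn hs hy hz, rfl⟩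
  have long_subset_short {b : Y} (hb : b ∈ Λl) : b ∈ G := by
    simpa using hΛ.short_sub_long_mem hn2 hs hl G.zero_mem hb
  have long_add_two_short {a b : Y} (ha : a ∈ Λl) (hb : b ∈ G) : a + b + b ∈ Λl := by
    convert hΛ.long_sub_two_smul_short_mem hn2 hs hl ha (G.neg_mem hb) using 1
    module
  have long_neg {x : Y} (hx : x ∈ Λl) : -x ∈ Λl := by
    simpa using long_add_two_short hx (G.neg_mem (long_subset_short hx))
  refine ⟨⟨G, rfl⟩, fun a ha b hb => long_add_two_short ha hb,
    fun a ha b hb => G.add_mem ha (long_subset_short hb), Set.Subset.antisymm ?_ fun x hx => ?_⟩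
  · rintro _ ⟨a, ha, b, hb, rfl⟩
    exact long_add_two_short ha (long_subset_short hb)
  · exact ⟨-x, long_neg hx, x, hx, by simp⟩

/-- Lemma 2.10(ii) for type `C_n`, `n ≥ 3`. -/
theorem statement2 {Y : Type*} [AddCommGroup Y] [Module ℝ Y] [FiniteDimensional ℝ Y]
    {n : ℕ} (hn : 3 ≤ n) (Λ : E n → Set Y) (Λs Λl : Set Y)
    (hED : IsExtensionDatum (Cn n) Λ)
    (hs : ∀ α ∈ longBC n, Λ α = Λs) (hl : ∀ α ∈ divBC n, Λ α = Λl) :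
    (∃ G : AddSubgroup Y, Λs = (G : Set Y)) ∧
    (∀ a ∈ Λl, ∀ b ∈ Λs, a + b + b ∈ Λl) ∧
    (∀ a ∈ Λs, ∀ b ∈ Λl, a + b ∈ Λs) ∧
    {x : Y | ∃ a ∈ Λl, ∃ b ∈ Λl, x = a + b + b} = Λl := by
  obtain ⟨α, hα⟩ := longBC_nonempty (by omega : 2 ≤ n)
  exact statement2_general hn Λ Λs Λl hED.1 (hs α hα ▸ hED.nonempty (Or.inl hα)) hs hl

end BdS
end
end
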